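/- Let U₁, U₂, V₁, V₂ be finite-dimensional real vector spaces with Dirac structures D_A on U₁ × U₂, D_B on V₁ × V₂, and D_I on U₂ × V₂. Define φ(u₁,u₂,v₁,v₂) = (u₁,u₂,u₂,v₂,v₁,v₂) and ψ(u₁,u₂,v₁,v₂) = (u₁,v₁). Then the composition (Fψ ∘ Bφ)(D_A × D_I × D_B) equals {(u₁,v₁,α₁,β₁) : ∃(u₂,v₂,α₂,β₂) with (u₂,v₂,−α₂,−β₂) ∈ D_I, (u₁,u₂,α₁,α₂) ∈ D_A, (v₁,v₂,β₁,β₂) ∈ D_B}. -/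

import Mathlib

open Module

def pairLR {V : Type*} [AddCommGroup V] [Module ℝ V]
    (x y : V × Module.Dual ℝ V) : ℝ := x.2 y.1 + y.2 x.1

def orthSet {V : Type*} [AddCommGroup V] [Module ℝ V]
    (D : Submodule ℝ (V × Module.Dual ℝ V)) : Set (V × Module.Dual ℝ V) :=
  {x | ∀ y ∈ D, pairLR x y = 0}

def IsDirac {V : Type*} [AddCommGroup V] [Module ℝ V]
    (D : Submodule ℝ (V × Module.Dual ℝ V)) : Prop :=
  (D : Set (V × Module.Dual ℝ V)) = orthSet D

def forwardD {V W : Type*} [AddCommGroup V] [Module ℝ V] [AddCommGroup W] [Module ℝ W]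
    (φ : V →ₗ[ℝ] W) (D : Submodule ℝ (V × Module.Dual ℝ V)) :
    Submodule ℝ (W × Module.Dual ℝ W) :=
  Submodule.map (φ.prodMap (LinearMap.id : Module.Dual ℝ W →ₗ[ℝ] Module.Dual ℝ W))
    (Submodule.comap ((LinearMap.id : V →ₗ[ℝ] V).prodMap φ.dualMap) D)

def backwardD {V W : Type*} [AddCommGroup V] [Module ℝ V] [AddCommGroup W] [Module ℝ W]
    (φ : V →ₗ[ℝ] W) (D : Submodule ℝ (W × Module.Dual ℝ W)) :
    Submodule ℝ (V × Module.Dual ℝ V) :=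
  Submodule.map ((LinearMap.id : V →ₗ[ℝ] V).prodMap φ.dualMap)
    (Submodule.comap (φ.prodMap (LinearMap.id : Module.Dual ℝ W →ₗ[ℝ] Module.Dual ℝ W)) D)

def prodDirac {V W : Type*} [AddCommGroup V] [Module ℝ V] [AddCommGroup W] [Module ℝ W]
    (D₁ : Submodule ℝ (V × Module.Dual ℝ V)) (D₂ : Submodule ℝ (W × Module.Dual ℝ W)) :
    Submodule ℝ ((V × W) × Module.Dual ℝ (V × W)) :=
  Submodule.comap
    (LinearMap.prod
      (LinearMap.prod
        ((LinearMap.fst ℝ V W).comp (LinearMap.fst ℝ (V × W) (Module.Dual ℝ (V × W))))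
        (((LinearMap.inl ℝ V W).dualMap).comp (LinearMap.snd ℝ (V × W) (Module.Dual ℝ (V × W)))))
      (LinearMap.prod
        ((LinearMap.snd ℝ V W).comp (LinearMap.fst ℝ (V × W) (Module.Dual ℝ (V × W))))
        (((LinearMap.inr ℝ V W).dualMap).comp (LinearMap.snd ℝ (V × W) (Module.Dual ℝ (V × W))))))
    (D₁.prod D₂)


section
variable (U₁ U₂ V₁ V₂ : Type*) [AddCommGroup U₁] [Module ℝ U₁] [AddCommGroup U₂] [Module ℝ U₂]
  [AddCommGroup V₁] [Module ℝ V₁] [AddCommGroup V₂] [Module ℝ V₂]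

/-- φ(u₁,u₂,v₁,v₂) = (u₁,u₂,u₂,v₂,v₁,v₂) -/
def phiMap : ((U₁ × U₂) × (V₁ × V₂)) →ₗ[ℝ] ((U₁ × U₂) × ((U₂ × V₂) × (V₁ × V₂))) :=
  (LinearMap.fst ℝ (U₁ × U₂) (V₁ × V₂)).prod
    (((((LinearMap.snd ℝ U₁ U₂).comp (LinearMap.fst ℝ (U₁ × U₂) (V₁ × V₂))).prod
        ((LinearMap.snd ℝ V₁ V₂).comp (LinearMap.snd ℝ (U₁ × U₂) (V₁ × V₂)))).prod
      (LinearMap.snd ℝ (U₁ × U₂) (V₁ × V₂))))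

/-- ψ(u₁,u₂,v₁,v₂) = (u₁,v₁) -/
def psiMap : ((U₁ × U₂) × (V₁ × V₂)) →ₗ[ℝ] (U₁ × V₁) :=
  ((LinearMap.fst ℝ U₁ U₂).comp (LinearMap.fst ℝ (U₁ × U₂) (V₁ × V₂))).prod
    ((LinearMap.fst ℝ V₁ V₂).comp (LinearMap.snd ℝ (U₁ × U₂) (V₁ × V₂)))

/-!
The cotangent part of `Fψ ∘ Bφ` is governed by the equation `φ* γ = ψ* (α₁, β₁)`. Writing a covector
on the target of `φ` in components as `γ = ((a₁, a₂), (c, d), (b₁, b₂))`, one has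
`φ* γ = ((a₁, a₂ + c), (b₁, b₂ + d))`, because `φ` duplicates `u₂` and `v₂`, whereas
`ψ* (α₁, β₁) = ((α₁, 0), (β₁, 0))`. Hence `a₁ = α₁`, `b₁ = β₁`, `c = -a₂` and `d = -b₂`: this is
where the signs in the `D_I` condition come from.
-/

section Coprod

variable {R M M₂ M₃ : Type*} [Semiring R] [AddCommMonoid M] [AddCommMonoid M₂] [AddCommMonoid M₃]
  [Module R M] [Module R M₂] [Module R M₃]

theorem coprod_eq_coprod_iff {f f' : M →ₗ[R] M₃} {g g' : M₂ →ₗ[R] M₃} :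
    f.coprod g = f'.coprod g' ↔ f = f' ∧ g = g' :=
  (LinearMap.coprodEquiv ℕ).injective.eq_iff.trans Prod.mk_inj

theorem exists_eq_coprod (h : M × M₂ →ₗ[R] M₃) : ∃ f g, h = LinearMap.coprod f g :=
  ⟨_, _, (LinearMap.coprod_comp_inl_inr h).symm⟩

end Coprod

section Dirac

variable {V W X : Type*} [AddCommGroup V] [Module ℝ V] [AddCommGroup W] [Module ℝ W]
  [AddCommGroup X] [Module ℝ X]

theorem mem_forwardD {f : V →ₗ[ℝ] W} {D : Submodule ℝ (V × Dual ℝ V)} {w : W} {β : Dual ℝ W} :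
    (w, β) ∈ forwardD f D ↔ ∃ v, f v = w ∧ (v, f.dualMap β) ∈ D := by
  simp [forwardD, and_comm]

theorem mem_backwardD {f : V →ₗ[ℝ] W} {D : Submodule ℝ (W × Dual ℝ W)} {v : V} {α : Dual ℝ V} :
    (v, α) ∈ backwardD f D ↔ ∃ β, f.dualMap β = α ∧ (f v, β) ∈ D := by
  simp [backwardD, and_comm]

theorem mem_forwardD_backwardD {f : V →ₗ[ℝ] W} {g : V →ₗ[ℝ] X} {D : Submodule ℝ (W × Dual ℝ W)}
    {x : X} {α : Dual ℝ X} :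
    (x, α) ∈ forwardD g (backwardD f D) ↔
      ∃ v, g v = x ∧ ∃ β, f.dualMap β = g.dualMap α ∧ (f v, β) ∈ D := by
  simp only [mem_forwardD, mem_backwardD]

theorem mk_coprod_mem_prodDirac {D₁ : Submodule ℝ (V × Dual ℝ V)} {D₂ : Submodule ℝ (W × Dual ℝ W)}
    {v : V} {w : W} {α : Dual ℝ V} {β : Dual ℝ W} :
    ((v, w), α.coprod β) ∈ prodDirac D₁ D₂ ↔ (v, α) ∈ D₁ ∧ (w, β) ∈ D₂ := by
  simp [prodDirac, LinearMap.dualMap_apply']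

end Dirac

section Composition

variable {U₁ U₂ V₁ V₂}

theorem phiMap_apply (x : (U₁ × U₂) × (V₁ × V₂)) :
    phiMap U₁ U₂ V₁ V₂ x = (x.1, ((x.1.2, x.2.2), x.2)) :=
  rfl

theorem psiMap_apply (x : (U₁ × U₂) × (V₁ × V₂)) :
    psiMap U₁ U₂ V₁ V₂ x = (x.1.1, x.2.1) :=
  rfl

theorem dualMap_phiMap_coprod (a₁ : Dual ℝ U₁) (a₂ c : Dual ℝ U₂) (b₁ : Dual ℝ V₁)
    (b₂ d : Dual ℝ V₂) :
    (phiMap U₁ U₂ V₁ V₂).dualMap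
        ((a₁.coprod a₂).coprod ((c.coprod d).coprod (b₁.coprod b₂))) =
      (a₁.coprod (a₂ + c)).coprod (b₁.coprod (b₂ + d)) := by
  ext <;> simp [phiMap_apply, add_comm]

theorem dualMap_psiMap_coprod (α₁ : Dual ℝ U₁) (β₁ : Dual ℝ V₁) :
    (psiMap U₁ U₂ V₁ V₂).dualMap (α₁.coprod β₁) =
      (α₁.coprod (0 : Dual ℝ U₂)).coprod (β₁.coprod (0 : Dual ℝ V₂)) := by
  ext <;> simp [psiMap_apply]

theorem dualMap_phiMap_eq_dualMap_psiMap_iff {α₁ : Dual ℝ U₁} {β₁ : Dual ℝ V₁}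
    {γ : Dual ℝ ((U₁ × U₂) × ((U₂ × V₂) × (V₁ × V₂)))} :
    (phiMap U₁ U₂ V₁ V₂).dualMap γ = (psiMap U₁ U₂ V₁ V₂).dualMap (α₁.coprod β₁) ↔
      ∃ (α₂ : Dual ℝ U₂) (β₂ : Dual ℝ V₂),
        γ = (α₁.coprod α₂).coprod (((-α₂).coprod (-β₂)).coprod (β₁.coprod β₂)) := by
  constructor
  · intro hγ
    obtain ⟨a, η, rfl⟩ := exists_eq_coprod γ
    obtain ⟨κ, b, rfl⟩ := exists_eq_coprod η
    obtain ⟨a₁, a₂, rfl⟩ := exists_eq_coprod a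
    obtain ⟨c, d, rfl⟩ := exists_eq_coprod κ
    obtain ⟨b₁, b₂, rfl⟩ := exists_eq_coprod b
    simp only [dualMap_phiMap_coprod, dualMap_psiMap_coprod, coprod_eq_coprod_iff,
      add_eq_zero_iff_eq_neg'] at hγ
    obtain ⟨⟨rfl, rfl⟩, rfl, rfl⟩ := hγ
    exact ⟨a₂, b₂, rfl⟩
  · rintro ⟨α₂, β₂, rfl⟩
    simp only [dualMap_phiMap_coprod, dualMap_psiMap_coprod, add_neg_cancel]

end Composition

theorem stmt15_general
    (DA : Submodule ℝ ((U₁ × U₂) × Dual ℝ (U₁ × U₂)))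
    (DI : Submodule ℝ ((U₂ × V₂) × Dual ℝ (U₂ × V₂)))
    (DB : Submodule ℝ ((V₁ × V₂) × Dual ℝ (V₁ × V₂)))
    (u₁ : U₁) (v₁ : V₁) (α₁ : Dual ℝ U₁) (β₁ : Dual ℝ V₁) :
    ((u₁, v₁), dualProdDualEquivDual ℝ U₁ V₁ (α₁, β₁)) ∈
      forwardD (psiMap U₁ U₂ V₁ V₂)
        (backwardD (phiMap U₁ U₂ V₁ V₂) (prodDirac DA (prodDirac DI DB))) ↔
    ∃ (u₂ : U₂) (v₂ : V₂) (α₂ : Dual ℝ U₂) (β₂ : Dual ℝ V₂),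
      ((u₂, v₂), dualProdDualEquivDual ℝ U₂ V₂ (-α₂, -β₂)) ∈ DI ∧
      ((u₁, u₂), dualProdDualEquivDual ℝ U₁ U₂ (α₁, α₂)) ∈ DA ∧
      ((v₁, v₂), dualProdDualEquivDual ℝ V₁ V₂ (β₁, β₂)) ∈ DB := by
  simp only [dualProdDualEquivDual_apply, mem_forwardD_backwardD,
    dualMap_phiMap_eq_dualMap_psiMap_iff]
  constructor
  · rintro ⟨⟨⟨x₁, u₂⟩, ⟨y₁, v₂⟩⟩, hx, _, ⟨α₂, β₂, rfl⟩, hmem⟩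
    obtain ⟨rfl, rfl⟩ : x₁ = u₁ ∧ y₁ = v₁ := Prod.mk_inj.mp hx
    simp only [phiMap_apply, mk_coprod_mem_prodDirac] at hmem
    obtain ⟨hA, hI, hB⟩ := hmem
    exact ⟨u₂, v₂, α₂, β₂, hI, hA, hB⟩
  · rintro ⟨u₂, v₂, α₂, β₂, hI, hA, hB⟩
    refine ⟨((u₁, u₂), (v₁, v₂)), psiMap_apply _, _, ⟨α₂, β₂, rfl⟩, ?_⟩
    simp only [phiMap_apply, mk_coprod_mem_prodDirac]
    exact ⟨hA, hI, hB⟩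

theorem stmt15 [FiniteDimensional ℝ U₁] [FiniteDimensional ℝ U₂]
    [FiniteDimensional ℝ V₁] [FiniteDimensional ℝ V₂]
    (DA : Submodule ℝ ((U₁ × U₂) × Module.Dual ℝ (U₁ × U₂)))
    (DI : Submodule ℝ ((U₂ × V₂) × Module.Dual ℝ (U₂ × V₂)))
    (DB : Submodule ℝ ((V₁ × V₂) × Module.Dual ℝ (V₁ × V₂)))
    (hA : IsDirac DA) (hI : IsDirac DI) (hB : IsDirac DB)
    (u₁ : U₁) (v₁ : V₁) (α₁ : Module.Dual ℝ U₁) (β₁ : Module.Dual ℝ V₁) :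
    ((u₁, v₁), Module.dualProdDualEquivDual ℝ U₁ V₁ (α₁, β₁)) ∈
      forwardD (psiMap U₁ U₂ V₁ V₂)
        (backwardD (phiMap U₁ U₂ V₁ V₂) (prodDirac DA (prodDirac DI DB))) ↔
    ∃ (u₂ : U₂) (v₂ : V₂) (α₂ : Module.Dual ℝ U₂) (β₂ : Module.Dual ℝ V₂),
      ((u₂, v₂), Module.dualProdDualEquivDual ℝ U₂ V₂ (-α₂, -β₂)) ∈ DI ∧
      ((u₁, u₂), Module.dualProdDualEquivDual ℝ U₁ U₂ (α₁, α₂)) ∈ DA ∧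
      ((v₁, v₂), Module.dualProdDualEquivDual ℝ V₁ V₂ (β₁, β₂)) ∈ DB :=
  stmt15_general U₁ U₂ V₁ V₂ DA DI DB u₁ v₁ α₁ β₁

end
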